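/- arXiv:2104.06302 — 2 statements merged into one kernel-verified Lean document; each statement's English description precedes it below -/
import Mathlib

section
/- Let σ be a saturation function and V₀(z,y) = ‖y‖² + ∫₀^{‖z‖} S(ξ)dξ + ∫₀^{‖z−y‖} S(ξ)dξ. There exist ε₀>0 and R>0 such that for every ε∈(0,ε₀) and every (z₀,y₀)∈ℝ²×ℝ², there exists a time T₁(z₀,y₀)≥0 such that the solution (z(t),y(t)) of (T_ε) with (z(0),y(0))=(z₀,y₀) satisfies V₀(z(t),y(t)) ≤ 2R for all t ≥ T₁(z₀,y₀). -/
open Real Filter MeasureTheory intervalIntegral RealInnerProductSpace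

noncomputable section

/-- A saturation function: odd, globally Lipschitz, sign-definite, with finite positive limits
of `σ` at `+∞` and of `σ ξ / ξ` at `0`, non-decreasing, differentiable on `(0,∞)` with
non-increasing derivative there. -/
def IsSaturation (σ : ℝ → ℝ) : Prop :=
  (∀ ξ, σ (-ξ) = -σ ξ) ∧
  (∃ L : NNReal, LipschitzWith L σ) ∧
  (∀ ξ : ℝ, ξ ≠ 0 → σ ξ * ξ > 0) ∧
  (∃ l > 0, Tendsto σ atTop (nhds l)) ∧
  (∃ l > 0, Tendsto (fun ξ => σ ξ / ξ) (nhdsWithin 0 {(0:ℝ)}ᶜ) (nhds l)) ∧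
  Monotone σ ∧
  DifferentiableOn ℝ σ (Set.Ioi 0) ∧
  AntitoneOn (deriv σ) (Set.Ioi 0)

/-- The modified saturation function `S` associated with `σ`:
`S ξ = (2/π) ∫_0^{π/2} sin v · σ(ξ sin v) dv`. -/
def modSat (σ : ℝ → ℝ) (ξ : ℝ) : ℝ :=
  (2 / Real.pi) * ∫ v in (0:ℝ)..(Real.pi / 2), Real.sin v * σ (ξ * Real.sin v)

abbrev E2 := EuclideanSpace ℝ (Fin 2)

open Classical in
/-- The radial vector field `f(z) = S(‖z‖) z / ‖z‖`, `f(0) = 0`. -/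
def fvec (σ : ℝ → ℝ) (z : E2) : E2 :=
  if z = 0 then 0 else (modSat σ ‖z‖ / ‖z‖) • z

/-- `b_ε(t) = R_{-2πt/ε} e₂ = (sin(2πt/ε), cos(2πt/ε))`. -/
def bvp (ε t : ℝ) : E2 :=
  (WithLp.equiv 2 (Fin 2 → ℝ)).symm ![Real.sin (2 * Real.pi * t / ε), Real.cos (2 * Real.pi * t / ε)]

/-- The Lyapunov function `V₀(z,y) = ‖y‖² + ∫₀^{‖z‖} S + ∫₀^{‖z-y‖} S`. -/
def V0 (σ : ℝ → ℝ) (z y : E2) : ℝ :=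
  ‖y‖ ^ 2 + (∫ ξ in (0:ℝ)..‖z‖, modSat σ ξ) + ∫ ξ in (0:ℝ)..‖z - y‖, modSat σ ξ

/-- `(z, y)` solves the time-varying system `(T_ε)`:
`ż = y - b_ε(t) σ(b_ε(t)ᵀ z)`, `ẏ = - b_ε(t) σ(b_ε(t)ᵀ z)`, for `t ≥ 0`. -/
def IsSolTeps (σ : ℝ → ℝ) (ε : ℝ) (z y : ℝ → E2) : Prop :=
  ∀ t : ℝ, 0 ≤ t →
    HasDerivAt z (y t - σ ⟪bvp ε t, z t⟫ • bvp ε t) t ∧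
    HasDerivAt y (-(σ ⟪bvp ε t, z t⟫) • bvp ε t) t

/-!
In the fast time `t / ε` the pulsed field `G` oscillates about its average `f`, the gradient of a
convex potential `Φ`. Along the averaged system `‖y‖² + Φ(z) + Φ(z - y)` has derivative
`-(‖f(z)‖² + ⟪y, f(z) - f(z - y)⟫)`, which is nonpositive because `f` is monotone and, thanks to the
linear growth of `Φ`, bounded away from zero outside a bounded set. Adding `ε ⟪f(z) + 2 y, H⟫`, with
`H = ∫₀¹ (s - 2) G(t / ε + s, z) ds`, cancels the oscillating part `⟪f + 2 y, f - G⟫` of the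
derivative. Differentiating `H` in `z` leaves a term of order `ε` that is quadratic in `y`; as the
weight `s - 2` is negative and `σ' ≥ 0`, its quadratic part has a favourable sign and the remainder
is `O(ε)` uniformly in the state. For small `ε` the corrected function therefore decreases at a
fixed rate outside a bounded set, so solutions enter one of its sublevel sets in finite time and
stay there.
-/

open scoped NNReal

section SlidingIntegral

variable {E F : Type*} [NormedAddCommGroup E] [NormedAddCommGroup F]

lemma exists_lipschitzOnWith_comp_window [ProperSpace E] {g : ℝ × E → F}
    (hg : LocallyLipschitz g) (p : ℝ × E) :
    ∃ K : ℝ≥0, ∀ s ∈ Set.Icc (0 : ℝ) 1,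
      LipschitzOnWith K (fun q => g (q + (s, 0))) (Metric.ball p 1) := by
  obtain ⟨K, hK⟩ := hg.locallyLipschitzOn.exists_lipschitzOnWith_of_compact
    (isCompact_closedBall p 2)
  refine ⟨K, fun s hs => ?_⟩
  have hmaps : Set.MapsTo (fun q : ℝ × E => q + (s, 0)) (Metric.ball p 1)
      (Metric.closedBall p 2) := by
    intro q hq
    have hs' : ‖((s, 0) : ℝ × E)‖ ≤ 1 := by
      simpa [Prod.norm_def, abs_of_nonneg hs.1] using hs.2
    rw [Metric.mem_ball, dist_eq_norm] at hq
    rw [Metric.mem_closedBall, dist_eq_norm, add_sub_right_comm]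
    linarith [norm_add_le (q - p) (s, 0)]
  simpa [Function.comp_def] using
    hK.comp (LipschitzWith.of_dist_le_mul (K := 1) (by simp)).lipschitzOnWith hmaps

variable [NormedSpace ℝ F] {w : ℝ → ℝ} {g : ℝ × E → F}

/-- The weighted average `∫₀¹ w(s) g(τ + s, z) ds` over the unit window that starts at the phase
`τ` of `p = (τ, z)`. Weight `1` gives the averaged field, weight `s - 2` the corrector. -/
def slidingIntegral (w : ℝ → ℝ) (g : ℝ × E → F) (p : ℝ × E) : F :=
  ∫ s in (0 : ℝ)..1, w s • g (p + (s, 0))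

lemma intervalIntegrable_smul_comp_window (hw : Continuous w) (hg : Continuous g) (p : ℝ × E) :
    IntervalIntegrable (fun s => w s • g (p + (s, 0))) volume 0 1 :=
  Continuous.intervalIntegrable (by fun_prop) _ _

lemma norm_slidingIntegral_le {A B : ℝ} (hw : ∀ s ∈ Set.Icc (0 : ℝ) 1, |w s| ≤ A)
    (hg : ∀ p, ‖g p‖ ≤ B) (p : ℝ × E) : ‖slidingIntegral w g p‖ ≤ A * B := by
  have hwindow : ∀ s ∈ Set.uIoc (0 : ℝ) 1, ‖w s • g (p + (s, 0))‖ ≤ A * B := by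
    intro s hs
    rw [Set.uIoc_of_le zero_le_one] at hs
    rw [norm_smul, Real.norm_eq_abs]
    have hws := hw s (Set.Ioc_subset_Icc_self hs)
    exact mul_le_mul hws (hg _) (norm_nonneg _) ((abs_nonneg _).trans hws)
  simpa [slidingIntegral] using intervalIntegral.norm_integral_le_of_norm_le_const hwindow

lemma slidingIntegral_one_add_phase (hper : Function.Periodic g (1, 0)) (p : ℝ × E) (τ : ℝ) :
    slidingIntegral (fun _ => 1) g (p + (τ, 0)) = slidingIntegral (fun _ => 1) g p := by
  have hperiodic : Function.Periodic (fun s => g (p + (s, 0))) 1 := fun s => by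
    have hp := hper (p + (s, 0))
    rwa [add_assoc, (by simp : ((s, 0) : ℝ × E) + (1, 0) = (s + 1, 0))] at hp
  have hshift := intervalIntegral.integral_comp_add_left (a := 0) (b := 1)
    (fun s => g (p + (s, 0))) τ
  rw [add_zero, hperiodic.intervalIntegral_add_eq τ 0, zero_add] at hshift
  simpa [slidingIntegral, add_assoc] using hshift

section Derivative

variable [NormedSpace ℝ E] [FiniteDimensional ℝ E] [FiniteDimensional ℝ F]

lemma intervalIntegrable_fderiv_and_hasFDerivAt_slidingIntegral (hw : Continuous w)
    (hg : Differentiable ℝ g) (hlip : LocallyLipschitz g) (p : ℝ × E) :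
    IntervalIntegrable (fun s => w s • fderiv ℝ g (p + (s, 0))) volume 0 1 ∧
      HasFDerivAt (slidingIntegral w g) (slidingIntegral w (fderiv ℝ g) p) p := by
  obtain ⟨K, hK⟩ := exists_lipschitzOnWith_comp_window hlip p
  borelize (ℝ × E) F
  have hmeas : Measurable fun s : ℝ => fderiv ℝ g (p + (s, 0)) :=
    (measurable_fderiv ℝ g).comp (by fun_prop : Continuous fun s : ℝ => p + (s, 0)).measurable
  refine intervalIntegral.hasFDerivAt_integral_of_dominated_loc_of_lip
    (F := fun q s => w s • g (q + (s, 0))) (bound := fun s => ‖w s‖ * K)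
    (Metric.ball_mem_nhds p one_pos) ?_ ?_ ?_ ?_ ?_ ?_
  · have := hg.continuous
    exact Eventually.of_forall fun q => Continuous.aestronglyMeasurable (by fun_prop)
  · exact intervalIntegrable_smul_comp_window hw hg.continuous p
  · exact (hw.measurable.smul hmeas).aestronglyMeasurable
  · refine Eventually.of_forall fun s hs => ?_
    rw [Set.uIoc_of_le zero_le_one] at hs
    have hbound : Real.nnabs (‖w s‖ * K) = ‖w s‖₊ * K := by ext; simp
    rw [hbound]
    exact (lipschitzWith_smul (w s)).comp_lipschitzOnWith (hK s (Set.Ioc_subset_Icc_self hs))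
  · exact Continuous.intervalIntegrable (by fun_prop) _ _
  · refine Eventually.of_forall fun s _ => ?_
    exact ((hasFDerivAt_comp_add_right _).2 (hg _).hasFDerivAt).const_smul (w s)

lemma intervalIntegrable_smul_fderiv_apply (hw : Continuous w) (hg : Differentiable ℝ g)
    (hlip : LocallyLipschitz g) (p v : ℝ × E) :
    IntervalIntegrable (fun s => w s • fderiv ℝ g (p + (s, 0)) v) volume 0 1 := by
  have hInt := (intervalIntegrable_fderiv_and_hasFDerivAt_slidingIntegral hw hg hlip p).1
  rw [intervalIntegrable_iff] at hInt ⊢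
  exact hInt.apply_continuousLinearMap v

lemma hasDerivAt_slidingIntegral (hw : Continuous w) (hg : Differentiable ℝ g)
    (hlip : LocallyLipschitz g) {p : ℝ → ℝ × E} {p' : ℝ × E} {t : ℝ} (hp : HasDerivAt p p' t) :
    HasDerivAt (fun t => slidingIntegral w g (p t))
      (slidingIntegral w (fun q => fderiv ℝ g q p') (p t)) t := by
  obtain ⟨hInt, hderiv⟩ :=
    intervalIntegrable_fderiv_and_hasFDerivAt_slidingIntegral hw hg hlip (p t)
  refine (hderiv.comp_hasDerivAt t hp).congr_deriv ?_
  exact ContinuousLinearMap.intervalIntegral_apply hInt p'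

lemma slidingIntegral_fderiv_smul_add (hw : Continuous w) (hg : Differentiable ℝ g)
    (hlip : LocallyLipschitz g) (a : ℝ) (p u v : ℝ × E) :
    slidingIntegral w (fun q => fderiv ℝ g q (a • u + v)) p =
      a • slidingIntegral w (fun q => fderiv ℝ g q u) p +
        slidingIntegral w (fun q => fderiv ℝ g q v) p := by
  simp only [slidingIntegral, map_add, map_smul, smul_add, smul_comm _ a]
  rw [← intervalIntegral.integral_smul]
  exact intervalIntegral.integral_add
    ((intervalIntegrable_smul_fderiv_apply hw hg hlip p u).smul a)
    (intervalIntegrable_smul_fderiv_apply hw hg hlip p v)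

-- For any offset `c` the boundary terms of the integration by parts combine to `g p`.
lemma slidingIntegral_sub_const_fderiv_phase (hg : Differentiable ℝ g)
    (hlip : LocallyLipschitz g) (hper : Function.Periodic g (1, 0)) (c : ℝ) (p : ℝ × E) :
    slidingIntegral (fun s => s - c) (fun q => fderiv ℝ g q (1, 0)) p =
      g p - slidingIntegral (fun _ => 1) g p := by
  have hg' := intervalIntegrable_smul_fderiv_apply (continuous_sub_right c) hg hlip p (1, 0)
  have hg1 := intervalIntegrable_smul_comp_window (w := fun _ => 1) continuous_const hg.continuous p
  have hderiv (s : ℝ) : HasDerivAt (fun s => (s - c) • g (p + (s, 0)))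
      ((s - c) • fderiv ℝ g (p + (s, 0)) (1, 0) + (1 : ℝ) • g (p + (s, 0))) s := by
    have hline : HasDerivAt (fun s : ℝ => p + (s, 0)) ((1, 0) : ℝ × E) s :=
      ((hasDerivAt_id s).prodMk (hasDerivAt_const s 0)).const_add p
    exact ((hasDerivAt_id s).sub_const c).smul ((hg _).hasFDerivAt.comp_hasDerivAt s hline)
  have hparts := intervalIntegral.integral_eq_sub_of_hasDerivAt (fun s _ => hderiv s)
    (hg'.add hg1)
  rw [intervalIntegral.integral_add hg' hg1, hper p, Prod.mk_zero_zero, add_zero] at hparts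
  rw [slidingIntegral, slidingIntegral, eq_sub_iff_add_eq, hparts]
  module

variable {z : ℝ → E} {z' : E} {t : ℝ}

lemma hasDerivAt_slidingIntegral_one (hg : Differentiable ℝ g) (hlip : LocallyLipschitz g)
    (hper : Function.Periodic g (1, 0)) (hz : HasDerivAt z z' t) (τ : ℝ) :
    HasDerivAt (fun t => slidingIntegral (fun _ => 1) g (0, z t))
      (slidingIntegral (fun _ => 1) (fun q => fderiv ℝ g q (0, z')) (τ, z t)) t := by
  have hper' : Function.Periodic (fun q => fderiv ℝ g q (0, z')) (1, 0) := fun q => by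
    simp only [← fderiv_comp_add_right, hper.funext]
  have hphase := slidingIntegral_one_add_phase hper' (0, z t) τ
  rw [Prod.mk_add_mk, zero_add, add_zero] at hphase
  rw [hphase]
  exact hasDerivAt_slidingIntegral continuous_const hg hlip ((hasDerivAt_const t 0).prodMk hz)

lemma hasDerivAt_slidingIntegral_sub_const (hg : Differentiable ℝ g) (hlip : LocallyLipschitz g)
    (hper : Function.Periodic g (1, 0)) (hz : HasDerivAt z z' t) (c ε : ℝ) :
    HasDerivAt (fun t => slidingIntegral (fun s => s - c) g (t / ε, z t))
      (ε⁻¹ • (g (t / ε, z t) - slidingIntegral (fun _ => 1) g (t / ε, z t)) +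
        slidingIntegral (fun s => s - c) (fun q => fderiv ℝ g q (0, z')) (t / ε, z t)) t := by
  have hcurve : HasDerivAt (fun t => (t / ε, z t)) (ε⁻¹ • (1, 0) + (0, z')) t := by
    simpa using ((hasDerivAt_id t).div_const ε).prodMk hz
  rw [← slidingIntegral_sub_const_fderiv_phase hg hlip hper c,
    ← slidingIntegral_fderiv_smul_add (continuous_sub_right c) hg hlip]
  exact hasDerivAt_slidingIntegral (continuous_sub_right c) hg hlip hcurve

end Derivative

end SlidingIntegral

section PulseField

variable {E : Type*} [NormedAddCommGroup E] [InnerProductSpace ℝ E] {b : ℝ → E} {σ : ℝ → ℝ}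

/-- The field `G(s, z) = σ(⟪b(s), z⟫) b(s)` applied along the direction `b(s)`; the phase `s` is
the fast time `t / ε`. -/
def pulseField (b : ℝ → E) (σ : ℝ → ℝ) (p : ℝ × E) : E := σ ⟪b p.1, p.2⟫ • b p.1

/-- The average over one period of the pulsed field, the right-hand side of the averaged system. -/
def averagedField (b : ℝ → E) (σ : ℝ → ℝ) (z : E) : E := ∫ s in (0 : ℝ)..1, pulseField b σ (s, z)

/-- The potential `∫₀¹ ∫₀^⟪b(s), z⟫ σ(x) dx ds`, whose gradient is the averaged field. -/
def pulsePotential (b : ℝ → E) (σ : ℝ → ℝ) (z : E) : ℝ :=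
  ∫ s in (0 : ℝ)..1, ∫ x in (0 : ℝ)..⟪b s, z⟫, σ x

/-- The first-order averaging corrector: along a solution its derivative is, to leading order,
`ε⁻¹` times the oscillating part of the pulsed field. Any weight `s - c` would do for this; the
choice `c = 2` makes the weight negative, so that the term it leaves in the derivative of the
Lyapunov function is bounded above. -/
def corrector (b : ℝ → E) (σ : ℝ → ℝ) (p : ℝ × E) : E :=
  slidingIntegral (fun s => s - 2) (pulseField b σ) p

lemma periodic_pulseField (hper : Function.Periodic b 1) :
    Function.Periodic (pulseField b σ) (1, 0) := fun p => by
  simp only [pulseField, Prod.fst_add, Prod.snd_add, add_zero, hper p.1]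

lemma differentiable_pulseField (hb : Differentiable ℝ b) (hσ : Differentiable ℝ σ) :
    Differentiable ℝ (pulseField b σ) := by
  have hphase : Differentiable ℝ fun p : ℝ × E => b p.1 := hb.comp differentiable_fst
  exact (hσ.comp (hphase.inner ℝ differentiable_snd)).smul hphase

lemma locallyLipschitz_pulseField {K : ℝ≥0} (hb : ContDiff ℝ 1 b) (hσ : LipschitzWith K σ) :
    LocallyLipschitz (pulseField b σ) := by
  have hphase : ContDiff ℝ 1 fun p : ℝ × E => b p.1 := hb.comp contDiff_fst
  have hsmul : ContDiff ℝ 1 fun x : ℝ × E => x.1 • x.2 := contDiff_fst.smul contDiff_snd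
  exact hsmul.locallyLipschitz.comp
    ((hσ.locallyLipschitz.comp (hphase.inner ℝ contDiff_snd).locallyLipschitz).prodMk
      hphase.locallyLipschitz)

lemma norm_pulseField_le {M : ℝ} (hb : ∀ s, ‖b s‖ ≤ 1) (hM : ∀ a, |σ a| ≤ M) (p : ℝ × E) :
    ‖pulseField b σ p‖ ≤ M := by
  rw [pulseField, norm_smul, Real.norm_eq_abs]
  exact (mul_le_of_le_one_right (abs_nonneg _) (hb _)).trans (hM _)

lemma fderiv_comp_fst_apply_zero_left (hb : Differentiable ℝ b) (p : ℝ × E) (v : E) :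
    fderiv ℝ (fun q : ℝ × E => b q.1) p (0, v) = 0 := by
  have hcomp : HasFDerivAt (fun q : ℝ × E => b q.1) _ p :=
    (hb p.1).hasFDerivAt.comp p hasFDerivAt_fst
  simp [hcomp.fderiv]

lemma fderiv_comp_inner_apply_zero_left (hb : Differentiable ℝ b) (hσ : Differentiable ℝ σ)
    (p : ℝ × E) (v : E) :
    fderiv ℝ (fun q : ℝ × E => σ ⟪b q.1, q.2⟫) p (0, v) =
      deriv σ ⟪b p.1, p.2⟫ * ⟪b p.1, v⟫ := by
  have hphase : Differentiable ℝ fun q : ℝ × E => b q.1 := hb.comp differentiable_fst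
  have hinner := (hphase.inner ℝ differentiable_snd) p
  have hcomp : HasFDerivAt (fun q : ℝ × E => σ ⟪b q.1, q.2⟫) _ p :=
    (hσ _).hasDerivAt.comp_hasFDerivAt p hinner.hasFDerivAt
  rw [hcomp.fderiv, smul_apply, fderiv_inner_apply ℝ (hphase p) differentiableAt_snd,
    fderiv_comp_fst_apply_zero_left hb, fderiv_snd]
  simp

lemma fderiv_pulseField_apply_zero_left (hb : Differentiable ℝ b) (hσ : Differentiable ℝ σ)
    (p : ℝ × E) (v : E) :
    fderiv ℝ (pulseField b σ) p (0, v) = (deriv σ ⟪b p.1, p.2⟫ * ⟪b p.1, v⟫) • b p.1 := by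
  have hphase : Differentiable ℝ fun q : ℝ × E => b q.1 := hb.comp differentiable_fst
  have hamplitude : Differentiable ℝ fun q : ℝ × E => σ ⟪b q.1, q.2⟫ :=
    hσ.comp (hphase.inner ℝ differentiable_snd)
  have hsmul : HasFDerivAt (pulseField b σ) _ p :=
    (hamplitude p).hasFDerivAt.smul (hphase p).hasFDerivAt
  simp [hsmul.fderiv, fderiv_comp_inner_apply_zero_left hb hσ,
    fderiv_comp_fst_apply_zero_left hb]

lemma slidingIntegral_one_pulseField (hper : Function.Periodic b 1) (τ : ℝ) (z : E) :
    slidingIntegral (fun _ => 1) (pulseField b σ) (τ, z) = averagedField b σ z := by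
  simpa [slidingIntegral, averagedField] using
    slidingIntegral_one_add_phase (periodic_pulseField (σ := σ) hper) (0, z) τ

lemma norm_averagedField_le {M : ℝ} (hb : ∀ s, ‖b s‖ ≤ 1) (hM : ∀ a, |σ a| ≤ M) (z : E) :
    ‖averagedField b σ z‖ ≤ M := by
  simpa [averagedField] using intervalIntegral.norm_integral_le_of_norm_le_const
    fun s (_ : s ∈ Set.uIoc (0 : ℝ) 1) => norm_pulseField_le hb hM (s, z)

lemma norm_corrector_le {M : ℝ} (hb : ∀ s, ‖b s‖ ≤ 1) (hM : ∀ a, |σ a| ≤ M) (p : ℝ × E) :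
    ‖corrector b σ p‖ ≤ 2 * M :=
  norm_slidingIntegral_le
    (fun s hs => abs_le.2 ⟨by linarith [hs.1], by linarith [hs.2]⟩) (norm_pulseField_le hb hM) p

lemma inner_averagedField [CompleteSpace E] (hb : Continuous b) (hσ : Continuous σ) (v z : E) :
    ⟪v, averagedField b σ z⟫ = ∫ s in (0 : ℝ)..1, σ ⟪b s, z⟫ * ⟪b s, v⟫ := by
  have hInt : IntervalIntegrable (fun s => pulseField b σ (s, z)) volume 0 1 :=
    Continuous.intervalIntegrable (by unfold pulseField; fun_prop) _ _
  have hcomm := (innerSL ℝ v).intervalIntegral_comp_comm hInt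
  simpa [averagedField, pulseField, inner_smul_right, real_inner_comm v] using hcomm.symm

end PulseField

section MonotonePrimitive

variable {σ : ℝ → ℝ} (hmono : Monotone σ)
include hmono

lemma mul_sub_le_integral_of_monotone (a c : ℝ) : σ a * (c - a) ≤ ∫ x in a..c, σ x := by
  rcases le_total a c with hac | hca
  · have hle := intervalIntegral.integral_mono_on (μ := volume) hac intervalIntegrable_const
      hmono.intervalIntegrable fun x hx => hmono hx.1
    rwa [intervalIntegral.integral_const, smul_eq_mul, mul_comm] at hle
  · have hle := intervalIntegral.integral_mono_on (μ := volume) hca hmono.intervalIntegrable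
      intervalIntegrable_const fun x hx => hmono hx.2
    rw [intervalIntegral.integral_const, smul_eq_mul] at hle
    rw [intervalIntegral.integral_symm]
    linarith

lemma integral_le_mul_of_monotone (a : ℝ) : ∫ x in (0 : ℝ)..a, σ x ≤ σ a * a := by
  have htangent := mul_sub_le_integral_of_monotone hmono a 0
  rw [intervalIntegral.integral_symm] at htangent
  linarith

variable (hσ0 : σ 0 = 0)
include hσ0

lemma integral_nonneg_of_monotone (a : ℝ) : 0 ≤ ∫ x in (0 : ℝ)..a, σ x := by
  simpa [hσ0] using mul_sub_le_integral_of_monotone hmono 0 a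

lemma mul_abs_sub_le_integral_of_monotone {k ρ : ℝ} (hk : 0 ≤ k) (hρ : k ≤ σ ρ)
    (hρ' : σ (-ρ) ≤ -k) (a : ℝ) : k * (|a| - ρ) ≤ ∫ x in (0 : ℝ)..a, σ x := by
  have hnonneg := integral_nonneg_of_monotone hmono hσ0
  have htangent (c : ℝ) : σ c * (a - c) ≤ ∫ x in (0 : ℝ)..a, σ x := by
    rw [← intervalIntegral.integral_add_adjacent_intervals (b := c) hmono.intervalIntegrable
      hmono.intervalIntegrable]
    exact (mul_sub_le_integral_of_monotone hmono c a).trans (le_add_of_nonneg_left (hnonneg c))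
  rcases le_total |a| ρ with hsmall | hlarge
  · exact (mul_nonpos_of_nonneg_of_nonpos hk (sub_nonpos.2 hsmall)).trans (hnonneg a)
  rcases abs_cases a with ⟨ha, -⟩ | ⟨ha, -⟩ <;> rw [ha] at hlarge ⊢
  · exact (mul_le_mul_of_nonneg_right hρ (sub_nonneg.2 hlarge)).trans (htangent ρ)
  · calc k * (-a - ρ) ≤ -σ (-ρ) * (-a - ρ) :=
          mul_le_mul_of_nonneg_right (le_neg_of_le_neg hρ') (sub_nonneg.2 hlarge)
      _ = σ (-ρ) * (a - -ρ) := by ring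
      _ ≤ _ := htangent (-ρ)

end MonotonePrimitive

section AveragedField

variable {E : Type*} [NormedAddCommGroup E] [InnerProductSpace ℝ E] {b : ℝ → E} {σ : ℝ → ℝ}

lemma continuous_integral_inner (hb : Continuous b) (hσ : Continuous σ) (z : E) :
    Continuous fun s => ∫ x in (0 : ℝ)..⟪b s, z⟫, σ x :=
  (intervalIntegral.continuous_primitive hσ.intervalIntegrable 0).comp (by fun_prop)

lemma pulsePotential_nonneg (hmono : Monotone σ) (hσ0 : σ 0 = 0) (z : E) :
    0 ≤ pulsePotential b σ z :=
  intervalIntegral.integral_nonneg zero_le_one fun _ _ => integral_nonneg_of_monotone hmono hσ0 _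

lemma pulsePotential_le {M : ℝ} (hb : ∀ s, ‖b s‖ ≤ 1) (hM : ∀ a, |σ a| ≤ M) (z : E) :
    pulsePotential b σ z ≤ M * ‖z‖ := by
  have hM0 : 0 ≤ M := (abs_nonneg _).trans (hM 0)
  have hprimitive (s : ℝ) : ‖∫ x in (0 : ℝ)..⟪b s, z⟫, σ x‖ ≤ M * ‖z‖ := by
    have hle := intervalIntegral.norm_integral_le_of_norm_le_const
      (f := σ) fun x (_ : x ∈ Set.uIoc 0 ⟪b s, z⟫) => hM x
    rw [sub_zero] at hle
    refine hle.trans (mul_le_mul_of_nonneg_left ?_ hM0)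
    exact (abs_real_inner_le_norm _ _).trans (mul_le_of_le_one_left (norm_nonneg z) (hb s))
  have hle := intervalIntegral.norm_integral_le_of_norm_le_const
    fun s (_ : s ∈ Set.uIoc (0 : ℝ) 1) => hprimitive s
  rw [sub_zero, abs_one, mul_one] at hle
  exact (le_abs_self _).trans hle

lemma le_pulsePotential (hb : Continuous b) (hσ : Continuous σ) (hmono : Monotone σ)
    (hσ0 : σ 0 = 0) {k ρ κ : ℝ} (hk : 0 ≤ k) (hρ : k ≤ σ ρ) (hρ' : σ (-ρ) ≤ -k) {z : E}
    (hexc : κ * ‖z‖ ≤ ∫ s in (0 : ℝ)..1, |⟪b s, z⟫|) :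
    k * (κ * ‖z‖ - ρ) ≤ pulsePotential b σ z := by
  have hInt : IntervalIntegrable (fun s => |⟪b s, z⟫|) volume 0 1 :=
    Continuous.intervalIntegrable (by fun_prop) _ _
  calc k * (κ * ‖z‖ - ρ) ≤ k * ((∫ s in (0 : ℝ)..1, |⟪b s, z⟫|) - ρ) := by gcongr
    _ = ∫ s in (0 : ℝ)..1, k * (|⟪b s, z⟫| - ρ) := by
        rw [intervalIntegral.integral_const_mul,
          intervalIntegral.integral_sub hInt intervalIntegrable_const]
        simp
    _ ≤ pulsePotential b σ z :=
        intervalIntegral.integral_mono_on zero_le_one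
          (Continuous.intervalIntegrable (by fun_prop) _ _)
          ((continuous_integral_inner hb hσ z).intervalIntegrable _ _)
          fun s _ => mul_abs_sub_le_integral_of_monotone hmono hσ0 hk hρ hρ' _

lemma pulsePotential_le_inner_averagedField [CompleteSpace E] (hb : Continuous b)
    (hσ : Continuous σ) (hmono : Monotone σ) (z : E) :
    pulsePotential b σ z ≤ ⟪z, averagedField b σ z⟫ := by
  rw [inner_averagedField hb hσ]
  exact intervalIntegral.integral_mono_on zero_le_one
    ((continuous_integral_inner hb hσ z).intervalIntegrable _ _)
    (Continuous.intervalIntegrable (by fun_prop) _ _)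
    fun s _ => integral_le_mul_of_monotone hmono _

lemma inner_sub_averagedField_sub_nonneg [CompleteSpace E] (hb : Continuous b)
    (hσ : Continuous σ) (hmono : Monotone σ) (z y : E) :
    0 ≤ ⟪y, averagedField b σ z - averagedField b σ (z - y)⟫ := by
  rw [inner_sub_right, inner_averagedField hb hσ, inner_averagedField hb hσ, sub_nonneg]
  refine intervalIntegral.integral_mono_on zero_le_one
    (Continuous.intervalIntegrable (by fun_prop) _ _)
    (Continuous.intervalIntegrable (by fun_prop) _ _) fun s _ => ?_
  rw [inner_sub_right]
  rcases le_total 0 ⟪b s, y⟫ with hy | hy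
  · exact mul_le_mul_of_nonneg_right (hmono (sub_le_self _ hy)) hy
  · exact mul_le_mul_of_nonpos_right (hmono (by linarith)) hy

lemma hasDerivAt_pulsePotential [FiniteDimensional ℝ E] (hb : ContDiff ℝ 1 b)
    (hσ : Continuous σ) {z : ℝ → E} {z' : E} {t : ℝ} (hz : HasDerivAt z z' t) :
    HasDerivAt (fun t => pulsePotential b σ (z t)) ⟪averagedField b σ (z t), z'⟫ t := by
  have hderiv (a : ℝ) : HasDerivAt (fun a => ∫ x in (0 : ℝ)..a, σ x) (σ a) a :=
    intervalIntegral.integral_hasDerivAt_right (hσ.intervalIntegrable _ _)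
      (hσ.stronglyMeasurableAtFilter _ _) hσ.continuousAt
  have hprimitive : ContDiff ℝ 1 fun a => ∫ x in (0 : ℝ)..a, σ x :=
    contDiff_one_iff_deriv.2 ⟨fun a => (hderiv a).differentiableAt, by
      simpa only [funext fun a => (hderiv a).deriv] using hσ⟩
  have hg : ContDiff ℝ 1 fun p : ℝ × E => ∫ x in (0 : ℝ)..⟪b p.1, p.2⟫, σ x :=
    hprimitive.comp ((hb.comp contDiff_fst).inner ℝ contDiff_snd)
  have hsliding := hasDerivAt_slidingIntegral (w := fun _ => 1) continuous_const
    (hg.differentiable one_ne_zero) hg.locallyLipschitz ((hasDerivAt_const t (0 : ℝ)).prodMk hz)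
  rw [real_inner_comm, inner_averagedField hb.continuous hσ]
  simpa [slidingIntegral, pulsePotential,
    fderiv_comp_inner_apply_zero_left (hb.differentiable one_ne_zero)
      (hprimitive.differentiable one_ne_zero), (hderiv _).deriv] using hsliding

end AveragedField

lemma exists_sq_le_norm_sq_add_inner_sub {E : Type*} [NormedAddCommGroup E]
    [InnerProductSpace ℝ E] {f : E → E} {q C M : ℝ} (hq : 0 < q)
    (hcoercive : ∀ z, 2 * q * ‖z‖ - C ≤ ⟪z, f z⟫) (hM : ∀ z, ‖f z‖ ≤ M)
    (hmono : ∀ z y, 0 ≤ ⟪y, f z - f (z - y)⟫) :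
    ∃ B, ∀ z y, B ≤ ‖z‖ + ‖y‖ → q ^ 2 ≤ ‖f z‖ ^ 2 + ⟪y, f z - f (z - y)⟫ := by
  refine ⟨(q ^ 2 + (3 * q + M) * (C / q) + C) / q, fun z y hB => ?_⟩
  rcases le_total q ‖f z‖ with hlarge | hsmall
  · nlinarith [hmono z y]
  have hz : ‖z‖ ≤ C / q := by
    rw [le_div_iff₀ hq]
    nlinarith [hcoercive z, real_inner_le_norm z (f z), norm_nonneg z]
  have hsplit : ⟪y, f z - f (z - y)⟫ = ⟪y, f z⟫ + ⟪z - y, f (z - y)⟫ - ⟪z, f (z - y)⟫ := by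
    simp only [inner_sub_right, inner_sub_left]
    ring
  have hyf : -(‖y‖ * q) ≤ ⟪y, f z⟫ := by
    have hle := neg_le_of_abs_le (abs_real_inner_le_norm y (f z))
    exact (neg_le_neg (mul_le_mul_of_nonneg_left hsmall (norm_nonneg y))).trans hle
  have hzf : ⟪z, f (z - y)⟫ ≤ ‖z‖ * M :=
    (real_inner_le_norm _ _).trans (mul_le_mul_of_nonneg_left (hM _) (norm_nonneg z))
  have htriangle : ‖y‖ - ‖z‖ ≤ ‖z - y‖ := by
    simpa [norm_sub_rev] using norm_sub_norm_le y z
  rw [div_le_iff₀ hq] at hB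
  have hM0 : 0 ≤ M := (norm_nonneg _).trans (hM z)
  calc q ^ 2 ≤ q * (‖z‖ + ‖y‖) - (3 * q + M) * ‖z‖ - C := by
        linarith [mul_le_mul_of_nonneg_left hz (by positivity : 0 ≤ 3 * q + M)]
    _ ≤ ⟪y, f z - f (z - y)⟫ := by
        linarith [hcoercive (z - y), mul_le_mul_of_nonneg_left htriangle hq.le]
    _ ≤ ‖f z‖ ^ 2 + ⟪y, f z - f (z - y)⟫ := le_add_of_nonneg_left (sq_nonneg _)

lemma mul_sub_mul_add_sub_mul_le {M w u c p h : ℝ} (hw : w ∈ Set.Icc (-2) (-1)) (hc : |c| ≤ M)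
    (hp : |p| ≤ M) (hh : |h| ≤ 2 * M) :
    w * ((u - c) * (p + 2 * u)) + (u - c) * h ≤ 12 * M ^ 2 := by
  have hM : 0 ≤ M := (abs_nonneg c).trans hc
  have hquadratic : 2 * u ^ 2 - 3 * M * |u| - M ^ 2 ≤ (u - c) * (p + 2 * u) := by
    have hcp : c * p ≤ M * M :=
      (le_abs_self _).trans ((abs_mul c p).trans_le (mul_le_mul hc hp (abs_nonneg _) hM))
    have hlinear : (2 * c - p) * u ≤ 3 * M * |u| := by
      refine (le_abs_self _).trans ((abs_mul _ _).trans_le ?_)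
      refine mul_le_mul_of_nonneg_right (abs_le.2 ⟨?_, ?_⟩) (abs_nonneg u) <;>
        linarith [abs_le.1 hc, abs_le.1 hp]
    linarith
  have hweighted : w * ((u - c) * (p + 2 * u)) ≤ -2 * u ^ 2 + 6 * M * |u| + 2 * M ^ 2 := by
    have hMu : 0 ≤ M * |u| := by positivity
    rcases le_total 0 ((u - c) * (p + 2 * u)) with hpos | hneg
    · nlinarith [mul_le_mul_of_nonneg_right hw.2 hpos, sq_nonneg M]
    · nlinarith [mul_le_mul_of_nonpos_right hw.1 hneg, sq_nonneg u]
  have hcross : (u - c) * h ≤ (|u| + M) * (2 * M) := by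
    refine (le_abs_self _).trans ((abs_mul _ _).trans_le ?_)
    exact mul_le_mul ((abs_sub u c).trans (by linarith)) hh (abs_nonneg _) (by positivity)
  nlinarith [sq_nonneg (|u| - 2 * M), sq_abs u]

lemma intervalIntegrable_const_inner {F : Type*} [NormedAddCommGroup F] [InnerProductSpace ℝ F]
    {g : ℝ → F} {μ : Measure ℝ} {a c : ℝ} (hg : IntervalIntegrable g μ a c) (v : F) :
    IntervalIntegrable (fun s => ⟪v, g s⟫) μ a c :=
  ⟨hg.1.const_inner v, hg.2.const_inner v⟩

lemma inner_slidingIntegral {E F : Type*} [NormedAddCommGroup E] [NormedAddCommGroup F]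
    [InnerProductSpace ℝ F] [CompleteSpace F] {w : ℝ → ℝ} {g : ℝ × E → F} {p : ℝ × E}
    (hInt : IntervalIntegrable (fun s => w s • g (p + (s, 0))) volume 0 1) (v : F) :
    ⟪v, slidingIntegral w g p⟫ = ∫ s in (0 : ℝ)..1, ⟪v, w s • g (p + (s, 0))⟫ :=
  ((innerSL ℝ v).intervalIntegral_comp_comm hInt).symm

lemma inner_sub_add_inner_smul_identity {E : Type*} [NormedAddCommGroup E] [InnerProductSpace ℝ E]
    {ε : ℝ} (hε : ε ≠ 0) (y G f g H A B : E) :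
    2 * ⟪y, -G⟫ + ⟪f, y - G⟫ + ⟪g, y - G - -G⟫ +
        ε * (⟪f + (2 : ℝ) • y, ε⁻¹ • (G - f) + B⟫ + ⟪A + (2 : ℝ) • -G, H⟫) =
      -(‖f‖ ^ 2 + ⟪y, f - g⟫) + ε * (⟪f + (2 : ℝ) • y, B⟫ + ⟪H, A⟫ - 2 * ⟪G, H⟫) := by
  have hoscillating : ε * ⟪f + (2 : ℝ) • y, ε⁻¹ • (G - f)⟫ = ⟪f + (2 : ℝ) • y, G - f⟫ := by
    rw [real_inner_smul_right, mul_inv_cancel_left₀ hε]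
  rw [inner_add_right, mul_add, mul_add, hoscillating, ← real_inner_self_eq_norm_sq]
  simp only [inner_add_left, inner_sub_right, inner_neg_left, inner_neg_right, real_inner_smul_left,
    sub_neg_eq_add, smul_neg, sub_add_cancel, real_inner_comm y, real_inner_comm A]
  ring

section Lyapunov

variable {E : Type*} [NormedAddCommGroup E] [InnerProductSpace ℝ E] {b : ℝ → E} {σ : ℝ → ℝ}

/-- Solutions on `[0, ∞)` of the double integrator `ż = y - G(t/ε, z)`, `ẏ = -G(t/ε, z)` driven by
the pulsed field `G`. -/
def IsPulsedSol (b : ℝ → E) (σ : ℝ → ℝ) (ε : ℝ) (z y : ℝ → E) : Prop :=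
  ∀ t, 0 ≤ t → HasDerivAt z (y t - pulseField b σ (t / ε, z t)) t ∧
    HasDerivAt y (-pulseField b σ (t / ε, z t)) t

/-- The Lyapunov function `‖y‖² + Φ(z) + Φ(z - y)` of the averaged system, where `Φ` is the
potential of the averaged field, completed by a term of order `ε` that cancels the oscillating part
of its derivative along solutions of the pulsed system. -/
def lyapunov (b : ℝ → E) (σ : ℝ → ℝ) (ε t : ℝ) (z y : E) : ℝ :=
  ‖y‖ ^ 2 + pulsePotential b σ z + pulsePotential b σ (z - y) +
    ε * ⟪averagedField b σ z + (2 : ℝ) • y, corrector b σ (t / ε, z)⟫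

variable {K : ℝ≥0} {M ε t : ℝ}

lemma inner_fderiv_pulseField_le (hb : Differentiable ℝ b) (hb1 : ∀ s, ‖b s‖ ≤ 1)
    (hσ : Differentiable ℝ σ) (hmono : Monotone σ) (hK : LipschitzWith K σ) {w : ℝ}
    (hw : w ∈ Set.Icc (-2) (-1)) {c f h : E} (hc : ‖c‖ ≤ M) (hf : ‖f‖ ≤ M) (hh : ‖h‖ ≤ 2 * M)
    (y : E) (q : ℝ × E) :
    ⟪f + (2 : ℝ) • y, w • fderiv ℝ (pulseField b σ) q (0, y - c)⟫ +
      ⟪h, (1 : ℝ) • fderiv ℝ (pulseField b σ) q (0, y - c)⟫ ≤ 12 * K * M ^ 2 := by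
  rw [fderiv_pulseField_apply_zero_left hb hσ]
  set a := b q.1
  set d := deriv σ ⟪a, q.2⟫
  have hd0 : 0 ≤ d := hmono.deriv_nonneg
  have hdK : d ≤ K := (le_abs_self d).trans (norm_deriv_le_of_lipschitz hK)
  have habs {v : E} {B : ℝ} (hv : ‖v‖ ≤ B) : |⟪a, v⟫| ≤ B :=
    (abs_real_inner_le_norm a v).trans
      ((mul_le_of_le_one_left (norm_nonneg v) (hb1 _)).trans hv)
  have hscalar := mul_sub_mul_add_sub_mul_le (u := ⟪a, y⟫) hw (habs hc) (habs hf) (habs hh)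
  calc _ = d * (w * ((⟪a, y⟫ - ⟪a, c⟫) * (⟪a, f⟫ + 2 * ⟪a, y⟫)) +
        (⟪a, y⟫ - ⟪a, c⟫) * ⟪a, h⟫) := by
        simp only [inner_add_left, real_inner_smul_right, inner_sub_right, real_inner_comm a]
        ring
    _ ≤ d * (12 * M ^ 2) := mul_le_mul_of_nonneg_left hscalar hd0
    _ ≤ K * (12 * M ^ 2) := mul_le_mul_of_nonneg_right hdK (by positivity)
    _ = 12 * K * M ^ 2 := by ring

variable [FiniteDimensional ℝ E]

lemma inner_slidingIntegral_fderiv_pulseField_le (hb : ContDiff ℝ 1 b) (hb1 : ∀ s, ‖b s‖ ≤ 1)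
    (hσ : Differentiable ℝ σ) (hmono : Monotone σ) (hK : LipschitzWith K σ) {c f h : E}
    (hc : ‖c‖ ≤ M) (hf : ‖f‖ ≤ M) (hh : ‖h‖ ≤ 2 * M) (y : E) (p : ℝ × E) :
    ⟪f + (2 : ℝ) • y, slidingIntegral (fun s => s - 2)
        (fun q => fderiv ℝ (pulseField b σ) q (0, y - c)) p⟫ +
      ⟪h, slidingIntegral (fun _ => 1) (fun q => fderiv ℝ (pulseField b σ) q (0, y - c)) p⟫ ≤
      12 * K * M ^ 2 := by
  have hb' := hb.differentiable one_ne_zero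
  have hInt {w : ℝ → ℝ} (hw : Continuous w) := intervalIntegrable_smul_fderiv_apply hw
    (differentiable_pulseField hb' hσ) (locallyLipschitz_pulseField hb hK) p (0, y - c)
  have hsub := hInt (continuous_sub_right 2)
  have hone := hInt (w := fun _ => 1) continuous_const
  have hsub' := intervalIntegrable_const_inner hsub (f + (2 : ℝ) • y)
  have hone' := intervalIntegrable_const_inner hone h
  rw [inner_slidingIntegral hsub, inner_slidingIntegral hone,
    ← intervalIntegral.integral_add hsub' hone']
  refine (intervalIntegral.integral_mono_on zero_le_one (hsub'.add hone') intervalIntegrable_const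
    fun s hs => inner_fderiv_pulseField_le hb' hb1 hσ hmono hK
      ⟨by linarith [hs.1], by linarith [hs.2]⟩ hc hf hh y (p + (s, 0))).trans_eq ?_
  simp

lemma hasDerivAt_corrector (hb : ContDiff ℝ 1 b) (hper : Function.Periodic b 1)
    (hσ : Differentiable ℝ σ) (hK : LipschitzWith K σ) {z : ℝ → E} {z' : E}
    (hz : HasDerivAt z z' t) :
    HasDerivAt (fun t => corrector b σ (t / ε, z t))
      (ε⁻¹ • (pulseField b σ (t / ε, z t) - averagedField b σ (z t)) +
        slidingIntegral (fun s => s - 2) (fun q => fderiv ℝ (pulseField b σ) q (0, z'))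
          (t / ε, z t)) t := by
  rw [← slidingIntegral_one_pulseField hper (t / ε)]
  exact hasDerivAt_slidingIntegral_sub_const
    (differentiable_pulseField (hb.differentiable one_ne_zero) hσ)
    (locallyLipschitz_pulseField hb hK) (periodic_pulseField hper) hz 2 ε

lemma hasDerivAt_averagedField (hb : ContDiff ℝ 1 b) (hper : Function.Periodic b 1)
    (hσ : Differentiable ℝ σ) (hK : LipschitzWith K σ) {z : ℝ → E} {z' : E}
    (hz : HasDerivAt z z' t) (τ : ℝ) :
    HasDerivAt (fun t => averagedField b σ (z t))
      (slidingIntegral (fun _ => 1) (fun q => fderiv ℝ (pulseField b σ) q (0, z')) (τ, z t)) t := by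
  simp only [← slidingIntegral_one_pulseField hper 0]
  exact hasDerivAt_slidingIntegral_one
    (differentiable_pulseField (hb.differentiable one_ne_zero) hσ)
    (locallyLipschitz_pulseField hb hK) (periodic_pulseField hper) hz τ

lemma IsPulsedSol.hasDerivAt_lyapunov {z y : ℝ → E} (hsol : IsPulsedSol b σ ε z y) (ht : 0 ≤ t)
    (hε : ε ≠ 0) (hb : ContDiff ℝ 1 b) (hper : Function.Periodic b 1)
    (hσ : Differentiable ℝ σ) (hK : LipschitzWith K σ) :
    letI p := (t / ε, z t)
    letI G := pulseField b σ p
    letI f := averagedField b σ (z t)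
    letI H := corrector b σ p
    HasDerivAt (fun t => lyapunov b σ ε t (z t) (y t))
      (-(‖f‖ ^ 2 + ⟪y t, f - averagedField b σ (z t - y t)⟫) +
        ε * (⟪f + (2 : ℝ) • y t, slidingIntegral (fun s => s - 2)
            (fun q => fderiv ℝ (pulseField b σ) q (0, y t - G)) p⟫ +
          ⟪H, slidingIntegral (fun _ => 1)
            (fun q => fderiv ℝ (pulseField b σ) q (0, y t - G)) p⟫ -
          2 * ⟪G, H⟫)) t := by
  obtain ⟨hz, hy⟩ := hsol t ht
  have hsum := (((hy.norm_sq).add (hasDerivAt_pulsePotential hb hσ.continuous hz)).add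
    (hasDerivAt_pulsePotential hb hσ.continuous (hz.sub hy))).add
      ((((hasDerivAt_averagedField hb hper hσ hK hz (t / ε)).add (hy.const_smul (2 : ℝ))).inner ℝ
        (hasDerivAt_corrector (ε := ε) hb hper hσ hK hz)).const_mul ε)
  exact hsum.congr_deriv (inner_sub_add_inner_smul_identity hε _ _ _ _ _ _ _)

lemma IsPulsedSol.deriv_lyapunov_le {z y : ℝ → E} (hsol : IsPulsedSol b σ ε z y) (ht : 0 ≤ t)
    (hε : 0 < ε) (hb : ContDiff ℝ 1 b) (hper : Function.Periodic b 1) (hb1 : ∀ s, ‖b s‖ ≤ 1)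
    (hσ : Differentiable ℝ σ) (hmono : Monotone σ) (hK : LipschitzWith K σ)
    (hM : ∀ a, |σ a| ≤ M) :
    deriv (fun t => lyapunov b σ ε t (z t) (y t)) t ≤
      -(‖averagedField b σ (z t)‖ ^ 2 +
          ⟪y t, averagedField b σ (z t) - averagedField b σ (z t - y t)⟫) +
        ε * ((12 * K + 4) * M ^ 2) := by
  set p := (t / ε, z t)
  have hG := norm_pulseField_le hb1 hM p
  have hH := norm_corrector_le hb1 hM p
  have hcorrection := inner_slidingIntegral_fderiv_pulseField_le hb hb1 hσ hmono hK hG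
    (norm_averagedField_le hb1 hM (z t)) hH (y t) p
  have hGH : -⟪pulseField b σ p, corrector b σ p⟫ ≤ M * (2 * M) :=
    (neg_le_abs _).trans ((abs_real_inner_le_norm _ _).trans
      (mul_le_mul hG hH (norm_nonneg _) ((norm_nonneg _).trans hG)))
  rw [(hsol.hasDerivAt_lyapunov ht hε.ne' hb hper hσ hK).deriv]
  gcongr
  linarith

end Lyapunov

section LyapunovBounds

variable {E : Type*} [NormedAddCommGroup E] [InnerProductSpace ℝ E] {b : ℝ → E} {σ : ℝ → ℝ}
  {M ε : ℝ}

lemma abs_inner_corrector_le (hε : ε ∈ Set.Icc (0 : ℝ) 1) (hb1 : ∀ s, ‖b s‖ ≤ 1)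
    (hM : ∀ a, |σ a| ≤ M) (z y : E) (p : ℝ × E) :
    |ε * ⟪averagedField b σ z + (2 : ℝ) • y, corrector b σ p⟫| ≤ (M + 2 * ‖y‖) * (2 * M) := by
  have hsum : ‖averagedField b σ z + (2 : ℝ) • y‖ ≤ M + 2 * ‖y‖ :=
    (norm_add_le _ _).trans (add_le_add (norm_averagedField_le hb1 hM z) (by simp [norm_smul]))
  rw [abs_mul, abs_of_nonneg hε.1]
  calc ε * |⟪averagedField b σ z + (2 : ℝ) • y, corrector b σ p⟫|
      ≤ |⟪averagedField b σ z + (2 : ℝ) • y, corrector b σ p⟫| :=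
        mul_le_of_le_one_left (abs_nonneg _) hε.2
    _ ≤ ‖averagedField b σ z + (2 : ℝ) • y‖ * ‖corrector b σ p‖ := abs_real_inner_le_norm _ _
    _ ≤ (M + 2 * ‖y‖) * (2 * M) :=
        mul_le_mul hsum (norm_corrector_le hb1 hM p) (norm_nonneg _) ((norm_nonneg _).trans hsum)

lemma lyapunov_le (hε : ε ∈ Set.Icc (0 : ℝ) 1) (hb1 : ∀ s, ‖b s‖ ≤ 1) (hM : ∀ a, |σ a| ≤ M)
    (t : ℝ) (z y : E) :
    lyapunov b σ ε t z y ≤ (‖z‖ + ‖y‖) ^ 2 + 6 * M * (‖z‖ + ‖y‖) + 2 * M ^ 2 := by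
  have hM0 : 0 ≤ M := (abs_nonneg _).trans (hM 0)
  have hcorrector := (abs_le.1 (abs_inner_corrector_le hε hb1 hM z y (t / ε, z))).2
  have hdiff : pulsePotential b σ (z - y) ≤ M * (‖z‖ + ‖y‖) :=
    (pulsePotential_le hb1 hM _).trans (mul_le_mul_of_nonneg_left (norm_sub_le z y) hM0)
  have hsq : ‖y‖ ^ 2 ≤ (‖z‖ + ‖y‖) ^ 2 := by gcongr; simp
  have hMz : 0 ≤ M * ‖z‖ := by positivity
  have hMy : 0 ≤ M * ‖y‖ := by positivity
  unfold lyapunov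
  linarith [pulsePotential_le hb1 hM z]

lemma le_lyapunov (hε : ε ∈ Set.Icc (0 : ℝ) 1) (hb1 : ∀ s, ‖b s‖ ≤ 1) (hM : ∀ a, |σ a| ≤ M)
    (hmono : Monotone σ) (hσ0 : σ 0 = 0) (t : ℝ) (z y : E) :
    (‖y‖ - 2 * M) ^ 2 + pulsePotential b σ z - 6 * M ^ 2 ≤ lyapunov b σ ε t z y := by
  have hcorrector := (abs_le.1 (abs_inner_corrector_le hε hb1 hM z y (t / ε, z))).1
  unfold lyapunov
  linarith [pulsePotential_nonneg (b := b) hmono hσ0 (z - y)]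

lemma norm_add_norm_le_of_lyapunov_le (hε : ε ∈ Set.Icc (0 : ℝ) 1) (hb1 : ∀ s, ‖b s‖ ≤ 1)
    (hM : ∀ a, |σ a| ≤ M) (hmono : Monotone σ) (hσ0 : σ 0 = 0) {q C : ℝ} (hq : 0 < q)
    {z : E} (hz : q * ‖z‖ - C ≤ pulsePotential b σ z) {t R : ℝ} {y : E}
    (hR : lyapunov b σ ε t z y ≤ R) :
    ‖z‖ + ‖y‖ ≤ (R + C + 6 * M ^ 2) / q + (R + C + 6 * M ^ 2 + 2 * M + 1) := by
  have hlower := le_lyapunov hε hb1 hM hmono hσ0 t z y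
  have hz' : ‖z‖ ≤ (R + C + 6 * M ^ 2) / q := by
    rw [le_div_iff₀' hq]
    nlinarith [sq_nonneg (‖y‖ - 2 * M)]
  have hy' : ‖y‖ ≤ R + C + 6 * M ^ 2 + 2 * M + 1 := by
    have hqz : 0 ≤ q * ‖z‖ := by positivity
    nlinarith [sq_nonneg (‖y‖ - 2 * M - 1)]
  exact add_le_add hz' hy'

end LyapunovBounds

section Barrier

variable {W : ℝ → ℝ} {a R c : ℝ}

lemma le_of_forall_le_imp_deriv_neg (hW : ∀ t, a ≤ t → DifferentiableAt ℝ W t)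
    (hderiv : ∀ t, a ≤ t → R ≤ W t → deriv W t < 0) (ha : W a ≤ R) {t : ℝ} (ht : a ≤ t) :
    W t ≤ R :=
  image_le_of_deriv_right_lt_deriv_boundary (B := fun _ => R) (B' := fun _ => 0)
    (fun s hs => (hW s hs.1).continuousAt.continuousWithinAt)
    (fun s hs => (hW s hs.1).hasDerivAt.hasDerivWithinAt) ha (fun s => hasDerivAt_const s R)
    (fun s hs hsR => hderiv s hs.1 hsR.ge) (Set.right_mem_Icc.2 ht)

lemma exists_forall_le_of_le_imp_deriv_lt (hc : 0 < c) (R w₀ : ℝ) :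
    ∃ T, 0 ≤ T ∧ ∀ W : ℝ → ℝ, W 0 = w₀ → (∀ t, 0 ≤ t → DifferentiableAt ℝ W t) →
      (∀ t, 0 ≤ t → R ≤ W t → deriv W t < -c) → ∀ t, T ≤ t → W t ≤ R := by
  set T := (max w₀ R - R) / c with hT
  have hT0 : 0 ≤ T := div_nonneg (sub_nonneg.2 (le_max_right _ _)) hc.le
  have hcT : max w₀ R - c * T = R := by rw [hT, mul_div_cancel₀ _ hc.ne', sub_sub_cancel]
  refine ⟨T, hT0, fun W hW0 hW hderiv t ht => ?_⟩
  have hbarrier : W T ≤ max w₀ R - c * T :=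
    image_le_of_deriv_right_lt_deriv_boundary (a := 0) (B := fun s => max w₀ R - c * s)
      (B' := fun _ => -c) (fun s hs => (hW s hs.1).continuousAt.continuousWithinAt)
      (fun s hs => (hW s hs.1).hasDerivAt.hasDerivWithinAt) (by simp [hW0])
      (fun s => by simpa using ((hasDerivAt_id s).const_mul c).const_sub (max w₀ R))
      (fun s hs hsB => hderiv s hs.1 (hsB ▸ hcT.ge.trans (by have := hs.2.le; gcongr)))
      (Set.right_mem_Icc.2 hT0)
  exact le_of_forall_le_imp_deriv_neg (fun s hs => hW s (hT0.trans hs))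
    (fun s hs hR => (hderiv s (hT0.trans hs) hR).trans (neg_lt_zero.2 hc))
    (hbarrier.trans_eq hcT) ht

end Barrier

lemma exists_pos_le_and_le_neg_of_monotone {σ : ℝ → ℝ} (hmono : Monotone σ)
    (hpos : ∃ a, 0 < σ a) (hneg : ∃ a, σ a < 0) :
    ∃ k > 0, ∃ ρ, k ≤ σ ρ ∧ σ (-ρ) ≤ -k := by
  obtain ⟨a, ha⟩ := hpos
  obtain ⟨c, hc⟩ := hneg
  refine ⟨min (σ a) (-σ c), lt_min ha (neg_pos.2 hc), max a (-c),
    (min_le_left _ _).trans (hmono (le_max_left _ _)), ?_⟩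
  have hle : σ (-max a (-c)) ≤ σ c := hmono (neg_le.1 (le_max_right _ _))
  linarith [min_le_right (σ a) (-σ c)]

section UltimateBound

variable {E : Type*} [NormedAddCommGroup E] [InnerProductSpace ℝ E] [FiniteDimensional ℝ E]
  {b : ℝ → E} {σ : ℝ → ℝ} {K : ℝ≥0} {M : ℝ}

lemma exists_deriv_lyapunov_lt (hb : ContDiff ℝ 1 b) (hper : Function.Periodic b 1)
    (hb1 : ∀ s, ‖b s‖ ≤ 1) (hσ : Differentiable ℝ σ) (hmono : Monotone σ)
    (hK : LipschitzWith K σ) (hM : ∀ a, |σ a| ≤ M) {q C : ℝ} (hq : 0 < q)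
    (hcoercive : ∀ z, 2 * q * ‖z‖ - C ≤ pulsePotential b σ z) :
    ∃ ε₀ ∈ Set.Ioc (0 : ℝ) 1, ∃ c > 0, ∃ R, ∀ ε ∈ Set.Ioo 0 ε₀, ∀ z y, IsPulsedSol b σ ε z y →
      ∀ t, 0 ≤ t → R ≤ lyapunov b σ ε t (z t) (y t) →
        deriv (fun t => lyapunov b σ ε t (z t) (y t)) t < -c := by
  obtain ⟨B, hB⟩ := exists_sq_le_norm_sq_add_inner_sub (M := M) hq
    (fun z => (hcoercive z).trans
      (pulsePotential_le_inner_averagedField hb.continuous hσ.continuous hmono z))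
    (norm_averagedField_le hb1 hM)
    (inner_sub_averagedField_sub_nonneg hb.continuous hσ.continuous hmono)
  have hM0 : 0 ≤ M := (abs_nonneg _).trans (hM 0)
  set D := (12 * K + 4) * M ^ 2 + 1 with hD
  have hD0 : 0 < D := by positivity
  refine ⟨min 1 (q ^ 2 / 2 / D), ⟨by positivity, min_le_left _ _⟩, q ^ 2 / 2, by positivity,
    B ^ 2 + 6 * M * B + 2 * M ^ 2 + 1, fun ε hε z y hsol t ht hR => ?_⟩
  have hε1 : ε ≤ 1 := hε.2.le.trans (min_le_left _ _)
  have hεD : ε * D < q ^ 2 / 2 := (lt_div_iff₀ hD0).1 (hε.2.trans_le (min_le_right _ _))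
  have hlarge : B ≤ ‖z t‖ + ‖y t‖ := by
    by_contra! hsmall
    have hupper := lyapunov_le ⟨hε.1.le, hε1⟩ hb1 hM t (z t) (y t)
    have hmonotone : (‖z t‖ + ‖y t‖) ^ 2 + 6 * M * (‖z t‖ + ‖y t‖) ≤ B ^ 2 + 6 * M * B := by
      gcongr
    linarith
  have hrate := hsol.deriv_lyapunov_le ht hε.1 hb hper hb1 hσ hmono hK hM
  rw [hD, mul_add, mul_one] at hεD
  linarith [hB _ _ hlarge, hε.1]

theorem exists_norm_add_norm_le_of_isPulsedSol (hb : ContDiff ℝ 1 b)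
    (hper : Function.Periodic b 1) (hb1 : ∀ s, ‖b s‖ ≤ 1) {κ : ℝ} (hκ : 0 < κ)
    (hexc : ∀ z, κ * ‖z‖ ≤ ∫ s in (0 : ℝ)..1, |⟪b s, z⟫|) (hσ : Differentiable ℝ σ)
    (hmono : Monotone σ) (hK : LipschitzWith K σ) (hM : ∀ a, |σ a| ≤ M) (hσ0 : σ 0 = 0)
    (hpos : ∃ a, 0 < σ a) (hneg : ∃ a, σ a < 0) :
    ∃ ε₀ > 0, ∃ r, ∀ ε, 0 < ε → ε < ε₀ → ∀ z₀ y₀, ∃ T, 0 ≤ T ∧ ∀ z y, IsPulsedSol b σ ε z y →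
      z 0 = z₀ → y 0 = y₀ → ∀ t, T ≤ t → ‖z t‖ + ‖y t‖ ≤ r := by
  obtain ⟨k, hk, ρ, hρ, hρ'⟩ := exists_pos_le_and_le_neg_of_monotone hmono hpos hneg
  have hcoercive (z : E) : k * κ * ‖z‖ - k * ρ ≤ pulsePotential b σ z := by
    rw [mul_assoc, ← mul_sub]
    exact le_pulsePotential hb.continuous hσ.continuous hmono hσ0 hk.le hρ hρ' (hexc z)
  obtain ⟨ε₀, hε₀, c, hc, R, hdecay⟩ := exists_deriv_lyapunov_lt hb hper hb1 hσ hmono hK hM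
    (half_pos (mul_pos hk hκ)) fun z => by rw [mul_div_cancel₀ _ two_ne_zero]; exact hcoercive z
  refine ⟨ε₀, hε₀.1, (R + k * ρ + 6 * M ^ 2) / (k * κ) + (R + k * ρ + 6 * M ^ 2 + 2 * M + 1),
    fun ε hε hεε₀ z₀ y₀ => ?_⟩
  obtain ⟨T, hT, hentrance⟩ := exists_forall_le_of_le_imp_deriv_lt hc R (lyapunov b σ ε 0 z₀ y₀)
  refine ⟨T, hT, fun z y hsol hz hy t ht => ?_⟩
  have hR := hentrance (fun t => lyapunov b σ ε t (z t) (y t)) (by simp only [hz, hy])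
    (fun t ht => (hsol.hasDerivAt_lyapunov ht hε.ne' hb hper hσ hK).differentiableAt)
    (hdecay ε ⟨hε, hεε₀⟩ z y hsol) t ht
  exact norm_add_norm_le_of_lyapunov_le ⟨hε.le, hεε₀.le.trans hε₀.2⟩ hb1 hM hmono hσ0
    (mul_pos hk hκ) (hcoercive _) hR

end UltimateBound

lemma bvp_eq_bvp_one_div (ε t : ℝ) : bvp ε t = bvp 1 (t / ε) := by
  simp only [bvp, div_one, mul_div_assoc]

lemma periodic_bvp_one : Function.Periodic (bvp 1) 1 := fun s => by
  simp only [bvp, mul_add, mul_one, div_one, Real.sin_add_two_pi, Real.cos_add_two_pi]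

lemma contDiff_bvp_one : ContDiff ℝ 1 (bvp 1) := by
  refine contDiff_euclidean.2 fun i => ?_
  fin_cases i
  · change ContDiff ℝ 1 fun s => Real.sin (2 * π * s / 1)
    fun_prop
  · change ContDiff ℝ 1 fun s => Real.cos (2 * π * s / 1)
    fun_prop

lemma norm_bvp (ε t : ℝ) : ‖bvp ε t‖ = 1 := by
  simp [bvp, EuclideanSpace.norm_eq]

lemma inner_bvp_one (s : ℝ) (z : E2) :
    ⟪bvp 1 s, z⟫ = Real.sin (2 * π * s) * z 0 + Real.cos (2 * π * s) * z 1 := by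
  simp [bvp, PiLp.inner_apply, mul_comm]

lemma norm_le_abs_inner_bvp_one_add (s : ℝ) (z : E2) :
    ‖z‖ ≤ |⟪bvp 1 s, z⟫| + |⟪bvp 1 (s + 1 / 4), z⟫| := by
  have hphase : 2 * π * (s + 1 / 4) = 2 * π * s + π / 2 := by ring
  have hpythagoras : ‖z‖ ^ 2 = ⟪bvp 1 s, z⟫ ^ 2 + ⟪bvp 1 (s + 1 / 4), z⟫ ^ 2 := by
    rw [inner_bvp_one, inner_bvp_one, hphase, Real.sin_add_pi_div_two, Real.cos_add_pi_div_two,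
      EuclideanSpace.real_norm_sq_eq, Fin.sum_univ_two]
    linear_combination (-z 0 ^ 2 - z 1 ^ 2) * Real.sin_sq_add_cos_sq (2 * π * s)
  refine le_of_sq_le_sq ?_ (by positivity)
  rw [hpythagoras, ← sq_abs, ← sq_abs ⟪bvp 1 (s + 1 / 4), z⟫]
  nlinarith [mul_nonneg (abs_nonneg ⟪bvp 1 s, z⟫) (abs_nonneg ⟪bvp 1 (s + 1 / 4), z⟫)]

lemma half_mul_norm_le_integral_abs_inner_bvp_one (z : E2) :
    1 / 2 * ‖z‖ ≤ ∫ s in (0 : ℝ)..1, |⟪bvp 1 s, z⟫| := by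
  have hcont : Continuous fun s => |⟪bvp 1 s, z⟫| :=
    ((contDiff_bvp_one.continuous).inner continuous_const).abs
  have hshift : ∫ s in (0 : ℝ)..1, |⟪bvp 1 (s + 1 / 4), z⟫| =
      ∫ s in (0 : ℝ)..1, |⟪bvp 1 s, z⟫| := by
    have hperiodic : Function.Periodic (fun s => |⟪bvp 1 s, z⟫|) 1 := fun s => by
      simp only [periodic_bvp_one s]
    have hwindow := hperiodic.intervalIntegral_add_eq (1 / 4) 0
    rw [intervalIntegral.integral_comp_add_right (fun s => |⟪bvp 1 s, z⟫|)]
    convert hwindow using 2 <;> norm_num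
  have hInt (r : ℝ) : IntervalIntegrable (fun s => |⟪bvp 1 (s + r), z⟫|) volume 0 1 :=
    (hcont.comp (continuous_add_const r)).intervalIntegrable _ _
  have hle : ‖z‖ ≤ ∫ s in (0 : ℝ)..1, (|⟪bvp 1 s, z⟫| + |⟪bvp 1 (s + 1 / 4), z⟫|) := by
    simpa using intervalIntegral.integral_mono_on (μ := volume) zero_le_one intervalIntegrable_const
      ((hcont.intervalIntegrable _ _).add (hInt (1 / 4)))
      fun s _ => norm_le_abs_inner_bvp_one_add s z
  rw [intervalIntegral.integral_add (hcont.intervalIntegrable _ _) (hInt _), hshift] at hle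
  linarith

lemma IsSolTeps.isPulsedSol {σ : ℝ → ℝ} {ε : ℝ} {z y : ℝ → E2} (hsol : IsSolTeps σ ε z y) :
    IsPulsedSol (bvp 1) σ ε z y := fun t ht => by
  simpa only [pulseField, ← bvp_eq_bvp_one_div, neg_smul] using hsol t ht

section ModifiedSaturation

variable {σ : ℝ → ℝ} {M : ℝ} (hM : ∀ a, |σ a| ≤ M)
include hM

lemma abs_modSat_le (ξ : ℝ) : |modSat σ ξ| ≤ M := by
  have hintegrand (v : ℝ) : ‖Real.sin v * σ (ξ * Real.sin v)‖ ≤ M := by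
    rw [norm_mul]
    exact (mul_le_of_le_one_left (norm_nonneg _) (Real.abs_sin_le_one v)).trans (hM _)
  have hle := intervalIntegral.norm_integral_le_of_norm_le_const
    fun v (_ : v ∈ Set.uIoc 0 (π / 2)) => hintegrand v
  rw [sub_zero, abs_of_pos pi_div_two_pos, Real.norm_eq_abs] at hle
  rw [modSat, abs_mul, abs_of_pos (by positivity)]
  calc 2 / π * |_| ≤ 2 / π * (M * (π / 2)) := by gcongr
    _ = M := by field_simp

lemma integral_modSat_le {r : ℝ} (hr : 0 ≤ r) : ∫ ξ in (0 : ℝ)..r, modSat σ ξ ≤ M * r := by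
  have hle := intervalIntegral.norm_integral_le_of_norm_le_const (f := modSat σ)
    fun ξ (_ : ξ ∈ Set.uIoc 0 r) => abs_modSat_le hM ξ
  rw [sub_zero, abs_of_nonneg hr] at hle
  exact (le_abs_self _).trans hle

lemma V0_le (z y : E2) : V0 σ z y ≤ (‖z‖ + ‖y‖) ^ 2 + 2 * M * (‖z‖ + ‖y‖) := by
  have hM0 : 0 ≤ M := (abs_nonneg _).trans (hM 0)
  have hz : ∫ ξ in (0 : ℝ)..‖z‖, modSat σ ξ ≤ M * (‖z‖ + ‖y‖) :=
    (integral_modSat_le hM (norm_nonneg z)).trans (by gcongr; simp)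
  have hzy : ∫ ξ in (0 : ℝ)..‖z - y‖, modSat σ ξ ≤ M * (‖z‖ + ‖y‖) :=
    (integral_modSat_le hM (norm_nonneg _)).trans (by gcongr; exact norm_sub_le z y)
  have hy : ‖y‖ ^ 2 ≤ (‖z‖ + ‖y‖) ^ 2 := by gcongr; simp
  unfold V0
  linarith

end ModifiedSaturation

section IsSaturation

variable {σ : ℝ → ℝ}

lemma IsSaturation.map_zero (h : IsSaturation σ) : σ 0 = 0 := by
  have hodd := h.1 0
  rw [neg_zero] at hodd
  linarith

lemma IsSaturation.differentiable (h : IsSaturation σ) : Differentiable ℝ σ := by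
  have h0 := h.map_zero
  obtain ⟨hodd, -, -, -, ⟨l, -, hslope⟩, -, hdiff, -⟩ := h
  have hright {x : ℝ} (hx : 0 < x) : DifferentiableAt ℝ σ x :=
    hdiff.differentiableAt (Ioi_mem_nhds hx)
  intro x
  rcases lt_trichotomy x 0 with hx | rfl | hx
  · have hreflect : (fun x => -σ (-x)) = σ := funext fun x => by rw [hodd, neg_neg]
    rw [← hreflect]
    exact (differentiableAt_comp_neg.2 (hright (neg_pos.2 hx))).neg
  · have hderiv : HasDerivAt σ l 0 :=
      hasDerivAt_iff_tendsto_slope.2 (hslope.congr fun x => by simp [slope_def_field, h0])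
    exact hderiv.differentiableAt
  · exact hright hx

lemma IsSaturation.exists_abs_le (h : IsSaturation σ) : ∃ M, ∀ a, |σ a| ≤ M := by
  obtain ⟨hodd, -, -, ⟨l, -, hlim⟩, -, hmono, -⟩ := h
  refine ⟨l, fun a => abs_le.2 ⟨neg_le.1 ?_, hmono.ge_of_tendsto hlim a⟩⟩
  exact hodd a ▸ hmono.ge_of_tendsto hlim (-a)

lemma IsSaturation.pos (h : IsSaturation σ) {a : ℝ} (ha : 0 < a) : 0 < σ a :=
  pos_of_mul_pos_left (h.2.2.1 a ha.ne') ha.le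

end IsSaturation

theorem stmt13_general {σ : ℝ → ℝ} (hσ : Differentiable ℝ σ) (hmono : Monotone σ)
    (hlip : ∃ K, LipschitzWith K σ) (hbdd : ∃ M, ∀ a, |σ a| ≤ M) (hσ0 : σ 0 = 0)
    (hpos : ∃ a, 0 < σ a) (hneg : ∃ a, σ a < 0) :
    ∃ ε₀ > 0, ∃ R > 0, ∀ ε : ℝ, 0 < ε → ε < ε₀ → ∀ z₀ y₀ : E2,
      ∃ T₁ : ℝ, 0 ≤ T₁ ∧
        ∀ z y : ℝ → E2, IsSolTeps σ ε z y → z 0 = z₀ → y 0 = y₀ →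
          ∀ t : ℝ, T₁ ≤ t → V0 σ (z t) (y t) ≤ 2 * R := by
  obtain ⟨K, hK⟩ := hlip
  obtain ⟨M, hM⟩ := hbdd
  obtain ⟨ε₀, hε₀, r, hbound⟩ := exists_norm_add_norm_le_of_isPulsedSol contDiff_bvp_one
    periodic_bvp_one (fun s => (norm_bvp 1 s).le) one_half_pos
    half_mul_norm_le_integral_abs_inner_bvp_one hσ hmono hK hM hσ0 hpos hneg
  have hM0 : 0 ≤ M := (abs_nonneg _).trans (hM 0)
  refine ⟨ε₀, hε₀, max 1 (r ^ 2 + 2 * M * r), by positivity, fun ε hε hεε₀ z₀ y₀ => ?_⟩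
  obtain ⟨T, hT, hentrance⟩ := hbound ε hε hεε₀ z₀ y₀
  refine ⟨T, hT, fun z y hsol hz hy t ht => ?_⟩
  have hr := hentrance z y hsol.isPulsedSol hz hy t ht
  calc V0 σ (z t) (y t) ≤ (‖z t‖ + ‖y t‖) ^ 2 + 2 * M * (‖z t‖ + ‖y t‖) := V0_le hM _ _
    _ ≤ r ^ 2 + 2 * M * r := by gcongr
    _ ≤ 2 * max 1 (r ^ 2 + 2 * M * r) := by
      linarith [le_max_left 1 (r ^ 2 + 2 * M * r), le_max_right 1 (r ^ 2 + 2 * M * r)]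

/-- Uniform ultimate boundedness for `(T_ε)`: for `ε` small, every solution eventually
enters and stays in the sublevel set `{V₀ ≤ 2R}`. -/
theorem stmt13 (σ : ℝ → ℝ) (hσ : IsSaturation σ) :
    ∃ ε₀ > 0, ∃ R > 0, ∀ ε : ℝ, 0 < ε → ε < ε₀ → ∀ z₀ y₀ : E2,
      ∃ T₁ : ℝ, 0 ≤ T₁ ∧
        ∀ z y : ℝ → E2, IsSolTeps σ ε z y → z 0 = z₀ → y 0 = y₀ →
          ∀ t : ℝ, T₁ ≤ t → V0 σ (z t) (y t) ≤ 2 * R := by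
  exact stmt13_general hσ.differentiable hσ.2.2.2.2.2.1 hσ.2.1 hσ.exists_abs_le hσ.map_zero
    ⟨1, hσ.pos one_pos⟩ ⟨-1, hσ.1 1 ▸ neg_lt_zero.2 (hσ.pos one_pos)⟩
end
end

section
/- Let σ be a saturation function and S its associated modified saturation function. There exists a constant C>0 such that for every ξ ≥ 0 and every M ≥ 1, one has S'(Mξ) ≥ (C/M³)·S'(ξ). -/
open Real Filter MeasureTheory intervalIntegral RealInnerProductSpace

noncomputable section

/-!
Differentiating under the integral gives `S'(ξ) = (2/π) ∫_0^{π/2} sin² v · σ'(ξ sin v) dv`. In the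
integral for `S'(Mξ)`, put `v = r w` with `r = 2/(πM)` and keep only `0 ≤ w ≤ π/2`; since `σ' ≥ 0`,
this is a lower bound. Jordan's inequality gives `M sin (r w) ≤ sin w`, so
`σ'(Mξ sin (r w)) ≥ σ'(ξ sin w)`, while concavity gives `sin² (r w) ≥ r² sin² w`. Together with
`dv = r dw` this yields `S'(Mξ) ≥ r³ S'(ξ)`.
-/

lemma sin_pos_of_mem_Ioc_pi_div_two {v : ℝ} (hv : v ∈ Set.Ioc 0 (π / 2)) : 0 < sin v :=
  sin_pos_of_pos_of_lt_pi hv.1 (by linarith [hv.2, pi_pos])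

lemma mul_sin_le_sin_mul {r w : ℝ} (hr₀ : 0 ≤ r) (hr₁ : r ≤ 1) (hw₀ : 0 ≤ w) (hwπ : w ≤ π) :
    r * sin w ≤ sin (r * w) := by
  simpa using strictConcaveOn_sin_Icc.concaveOn.2 ⟨le_rfl, pi_pos.le⟩ ⟨hw₀, hwπ⟩
    (sub_nonneg.2 hr₁) hr₀ (sub_add_cancel 1 r)

lemma sin_mul_le_pi_div_two_mul_sin {r w : ℝ} (hr : 0 ≤ r) (hw₀ : 0 ≤ w) (hw : w ≤ π / 2) :
    sin (r * w) ≤ π / 2 * r * sin w :=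
  calc
    sin (r * w) ≤ r * w := sin_le (mul_nonneg hr hw₀)
    _ = π / 2 * r * (2 / π * w) := by field_simp
    _ ≤ π / 2 * r * sin w := by gcongr; exact mul_le_sin hw₀ hw

lemma intervalIntegrable_comp_mul_left_of_le_one {f : ℝ → ℝ} {a r : ℝ} (ha : 0 ≤ a) (hr₀ : 0 < r)
    (hr₁ : r ≤ 1) (hf : IntervalIntegrable f volume 0 a) :
    IntervalIntegrable (fun v ↦ f (r * v)) volume 0 a := by
  have h : IntervalIntegrable (fun v ↦ f (r * v)) volume 0 (a / r) := by
    simpa using hf.comp_mul_left (c := r)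
  refine h.mono_set (Set.uIcc_subset_uIcc_left ?_)
  rw [Set.uIcc_of_le (by positivity)]
  exact ⟨ha, le_div_self ha hr₀ hr₁⟩

lemma mul_integral_comp_mul_left_le {f : ℝ → ℝ} {a r : ℝ} (ha : 0 ≤ a) (hr₀ : 0 ≤ r)
    (hr₁ : r ≤ 1) (hf : IntervalIntegrable f volume 0 a) (hf₀ : ∀ v ∈ Set.Ioc 0 a, 0 ≤ f v) :
    r * ∫ v in 0..a, f (r * v) ≤ ∫ v in 0..a, f v := by
  rw [mul_integral_comp_mul_left, mul_zero]
  exact integral_mono_interval le_rfl (mul_nonneg hr₀ ha) (mul_le_of_le_one_left ha hr₁)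
    (ae_restrict_of_forall_mem measurableSet_Ioc hf₀) hf

/-- The transform `g ↦ (ξ ↦ (2/π) ∫_0^{π/2} sin² v · g(ξ sin v) dv)`, which sends `σ'` to `S'`. -/
def sinSqTransform (g : ℝ → ℝ) (ξ : ℝ) : ℝ :=
  2 / π * ∫ v in 0..π / 2, sin v ^ 2 * g (ξ * sin v)

section Dilation

variable {g : ℝ → ℝ} {ξ r : ℝ}

lemma sq_mul_sin_sq_mul_comp_le (hg₀ : ∀ x, 0 ≤ x → 0 ≤ g x) (hg : AntitoneOn g (Set.Ioi 0))
    (hξ : 0 ≤ ξ) (hr₀ : 0 < r) (hr₁ : r ≤ 1) {w : ℝ} (hw₀ : 0 < w) (hw : w < π / 2) :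
    r ^ 2 * (sin w ^ 2 * g (π / 2 * r * ξ * sin w)) ≤ sin (r * w) ^ 2 * g (ξ * sin (r * w)) := by
  have hsin : 0 < sin w := sin_pos_of_mem_Ioc_pi_div_two ⟨hw₀, hw.le⟩
  have hlower : r * sin w ≤ sin (r * w) :=
    mul_sin_le_sin_mul hr₀.le hr₁ hw₀.le (by linarith)
  have hupper : ξ * sin (r * w) ≤ π / 2 * r * ξ * sin w :=
    calc
      ξ * sin (r * w) ≤ ξ * (π / 2 * r * sin w) := by
        gcongr; exact sin_mul_le_pi_div_two_mul_sin hr₀.le hw₀.le hw.le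
      _ = π / 2 * r * ξ * sin w := by ring
  have hsin_mul : 0 < sin (r * w) := (mul_pos hr₀ hsin).trans_le hlower
  have hanti : g (π / 2 * r * ξ * sin w) ≤ g (ξ * sin (r * w)) := by
    rcases hξ.eq_or_lt with rfl | hξ
    · simp
    · have hpos : 0 < ξ * sin (r * w) := mul_pos hξ hsin_mul
      exact hg hpos (hpos.trans_le hupper) hupper
  rw [← mul_assoc, ← mul_pow]
  gcongr
  exact hg₀ _ (by positivity)

lemma pow_three_mul_sinSqTransform_le (hg₀ : ∀ x, 0 ≤ x → 0 ≤ g x)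
    (hg : AntitoneOn g (Set.Ioi 0)) (hξ : 0 ≤ ξ) (hr₀ : 0 < r) (hr₁ : r ≤ 1)
    (hgi : IntervalIntegrable (fun v ↦ sin v ^ 2 * g (ξ * sin v)) volume 0 (π / 2))
    (hgi' : IntervalIntegrable (fun v ↦ sin v ^ 2 * g (π / 2 * r * ξ * sin v)) volume 0 (π / 2)) :
    r ^ 3 * sinSqTransform g (π / 2 * r * ξ) ≤ sinSqTransform g ξ := by
  have hpi : 0 ≤ π / 2 := pi_div_two_pos.le
  have hnonneg : ∀ v ∈ Set.Ioc 0 (π / 2), 0 ≤ sin v ^ 2 * g (ξ * sin v) := fun v hv ↦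
    mul_nonneg (sq_nonneg _) <| hg₀ _ <| mul_nonneg hξ (sin_pos_of_mem_Ioc_pi_div_two hv).le
  calc
    r ^ 3 * sinSqTransform g (π / 2 * r * ξ)
      = 2 / π * (r * ∫ w in 0..π / 2, r ^ 2 * (sin w ^ 2 * g (π / 2 * r * ξ * sin w))) := by
        rw [sinSqTransform, intervalIntegral.integral_const_mul]
        ring
    _ ≤ 2 / π * (r * ∫ w in 0..π / 2, sin (r * w) ^ 2 * g (ξ * sin (r * w))) := by
        gcongr
        exact integral_mono_on_of_le_Ioo hpi (hgi'.const_mul _)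
          (intervalIntegrable_comp_mul_left_of_le_one hpi hr₀ hr₁ hgi)
          fun w hw ↦ sq_mul_sin_sq_mul_comp_le hg₀ hg hξ hr₀ hr₁ hw.1 hw.2
    _ ≤ sinSqTransform g ξ := by
        rw [sinSqTransform]
        gcongr
        exact mul_integral_comp_mul_left_le hpi hr₀.le hr₁ hgi hnonneg

end Dilation

section Derivative

variable {σ : ℝ → ℝ} {L : NNReal}

lemma lipschitzWith_mul_comp_mul_of_abs_le_one (hL : LipschitzWith L σ) {c : ℝ} (hc : |c| ≤ 1) :
    LipschitzWith L fun x ↦ c * σ (x * c) := by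
  refine LipschitzWith.of_dist_le_mul fun x y ↦ ?_
  calc
    dist (c * σ (x * c)) (c * σ (y * c)) = |c| * dist (σ (x * c)) (σ (y * c)) := by
      rw [Real.dist_eq, Real.dist_eq, ← mul_sub, abs_mul]
    _ ≤ |c| * (L * (dist x y * |c|)) := by
      gcongr
      simpa only [Real.dist_eq, ← sub_mul, abs_mul] using hL.dist_le_mul (x * c) (y * c)
    _ ≤ 1 * (L * (dist x y * 1)) := by gcongr
    _ = L * dist x y := by ring

lemma intervalIntegrable_and_hasDerivAt_modSat (hL : LipschitzWith L σ) {ξ : ℝ}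
    (hd : ∀ v ∈ Set.Ioc 0 (π / 2), DifferentiableAt ℝ σ (ξ * sin v)) :
    IntervalIntegrable (fun v ↦ sin v ^ 2 * deriv σ (ξ * sin v)) volume 0 (π / 2) ∧
      HasDerivAt (modSat σ) (sinSqTransform (deriv σ) ξ) ξ := by
  have hσ : Continuous σ := hL.continuous
  have hLip (v : ℝ) : LipschitzWith (Real.nnabs L) fun x ↦ sin v * σ (x * sin v) := by
    simpa using lipschitzWith_mul_comp_mul_of_abs_le_one hL (abs_sin_le_one v)
  have hderiv : ∀ v ∈ Set.uIoc 0 (π / 2),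
      HasDerivAt (fun x ↦ sin v * σ (x * sin v)) (sin v ^ 2 * deriv σ (ξ * sin v)) ξ := by
    intro v hv
    rw [Set.uIoc_of_le pi_div_two_pos.le] at hv
    have hcomp := (hd v hv).hasDerivAt.comp ξ (hasDerivAt_mul_const (sin v))
    exact (hcomp.const_mul (sin v)).congr_deriv (by ring)
  have hdom := hasDerivAt_integral_of_dominated_loc_of_lip (μ := volume) (bound := fun _ ↦ (L : ℝ))
    (F' := fun v ↦ sin v ^ 2 * deriv σ (ξ * sin v)) univ_mem
    (.of_forall fun x ↦ Continuous.aestronglyMeasurable (by fun_prop))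
    (Continuous.intervalIntegrable (by fun_prop) _ _)
    (Measurable.aestronglyMeasurable (by fun_prop))
    (.of_forall fun v _ ↦ (hLip v).lipschitzOnWith) intervalIntegrable_const
    (.of_forall hderiv)
  exact ⟨hdom.1, hdom.2.const_mul (2 / π)⟩

end Derivative

lemma IsSaturation.differentiableAt {σ : ℝ → ℝ} (hσ : IsSaturation σ) {x : ℝ} (hx : 0 ≤ x) :
    DifferentiableAt ℝ σ x := by
  obtain ⟨hodd, -, -, -, ⟨l, -, hl⟩, -, hd, -⟩ := hσ
  rcases hx.eq_or_lt with rfl | hx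
  · have h₀ : σ 0 = 0 := by simpa [self_eq_neg] using hodd 0
    have hslope : slope σ 0 = fun x ↦ σ x / x := by
      ext x
      rw [slope_def_field, h₀, sub_zero, sub_zero]
    exact (hasDerivAt_iff_tendsto_slope.2 (hslope ▸ hl)).differentiableAt
  · exact hd.differentiableAt (Ioi_mem_nhds hx)

theorem stmt19_general {σ : ℝ → ℝ} {L : NNReal} (hL : LipschitzWith L σ) (hmono : Monotone σ)
    (hd : ∀ x, 0 ≤ x → DifferentiableAt ℝ σ x) (hanti : AntitoneOn (deriv σ) (Set.Ioi 0))
    {ξ M : ℝ} (hξ : 0 ≤ ξ) (hM : 2 / π ≤ M) :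
    (2 / π) ^ 3 / M ^ 3 * deriv (modSat σ) ξ ≤ deriv (modSat σ) (M * ξ) := by
  have hM₀ : 0 < M := (div_pos two_pos pi_pos).trans_le hM
  have hdiff {x : ℝ} (hx : 0 ≤ x) := intervalIntegrable_and_hasDerivAt_modSat hL (ξ := x)
    fun _ hv ↦ hd _ <| mul_nonneg hx (sin_pos_of_mem_Ioc_pi_div_two hv).le
  obtain ⟨hgi, hderiv⟩ := hdiff hξ
  obtain ⟨hgiM, hderivM⟩ := hdiff (mul_nonneg hM₀.le hξ)
  have hscale : π / 2 * (2 / π / M) * (M * ξ) = ξ := by field_simp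
  rw [hderiv.deriv, hderivM.deriv, ← div_pow]
  simpa only [hscale] using pow_three_mul_sinSqTransform_le (r := 2 / π / M)
    (fun _ _ ↦ hmono.deriv_nonneg) hanti (mul_nonneg hM₀.le hξ) (by positivity)
    ((div_le_one hM₀).2 hM) hgiM (by rwa [hscale])

/-- There is `C > 0` with `S'(Mξ) ≥ (C/M³) S'(ξ)` for every `ξ ≥ 0` and `M ≥ 1`. -/
theorem stmt19 (σ : ℝ → ℝ) (hσ : IsSaturation σ) :
    ∃ C > 0, ∀ ξ : ℝ, 0 ≤ ξ → ∀ M : ℝ, 1 ≤ M →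
      C / M ^ 3 * deriv (modSat σ) ξ ≤ deriv (modSat σ) (M * ξ) := by
  have ⟨_, ⟨_, hL⟩, _, _, _, hmono, _, hanti⟩ := hσ
  exact ⟨(2 / π) ^ 3, by positivity, fun _ hξ _ hM ↦ stmt19_general hL hmono
    (fun _ ↦ hσ.differentiableAt) hanti hξ (((div_le_one pi_pos).2 two_le_pi).trans hM)⟩
end
end
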